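/- arXiv:2301.03120 — 2 statements merged into one kernel-verified Lean document; each statement's English description precedes it below -/
import Mathlib

section
/- There exists a 4-dimensional 2-uniform subspace of the 7-partite space C^2 ⊗ (C^3)^{⊗6}, i.e., a 4-dimensional linear subspace every unit vector of which has all its reductions to any 2 of the 7 parties maximally mixed. -/
/-!
Common definitions: multipartite systems with parties indexed by a finite type `ι`,
local dimensions `d : ι → ℕ`, vectors as functions on the configuration space,
partial traces, and `r`-uniform states and subspaces.
-/

open scoped ComplexConjugate Matrix

namespace RUnif

variable {ι : Type} [Fintype ι] [DecidableEq ι]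

/-- Configuration space (computational basis index set) of the multipartite system
`ℂ^{d i₁} ⊗ ... ⊗ ℂ^{d iₙ}`. -/
abbrev Cfg (d : ι → ℕ) : Type := ∀ i, Fin (d i)

/-- The multipartite Hilbert space `ℂ^{d i₁} ⊗ ... ⊗ ℂ^{d iₙ}`, realized as functions
on the configuration space. -/
abbrev H (d : ι → ℕ) : Type := Cfg d → ℂ

/-- The standard hermitian inner product `⟪φ, ψ⟫`. -/
noncomputable def dotc (d : ι → ℕ) (φ ψ : H d) : ℂ :=
  ∑ x, conj (φ x) * ψ x

/-- The rank-one operator `|ψ⟩⟨φ|` as a matrix. -/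
noncomputable def dyad (d : ι → ℕ) (ψ φ : H d) : Matrix (Cfg d) (Cfg d) ℂ :=
  Matrix.of fun x y => ψ x * conj (φ y)

/-- Configurations of the parties inside `S`. -/
abbrev SubCfg (d : ι → ℕ) (S : Finset ι) : Type := ∀ i : S, Fin (d i.1)

/-- Configurations of the parties outside `S`. -/
abbrev CoCfg (d : ι → ℕ) (S : Finset ι) : Type := ∀ i : {j : ι // j ∉ S}, Fin (d i.1)

/-- Merge a configuration of the parties in `S` with one of the parties outside `S`. -/
def merge (d : ι → ℕ) (S : Finset ι) (a : SubCfg d S) (c : CoCfg d S) : Cfg d :=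
  fun i => if h : i ∈ S then a ⟨i, h⟩ else c ⟨i, h⟩

/-- Partial trace over the parties *outside* `S` (i.e. `Tr_{Sᶜ}`), leaving an operator
on the parties in `S`. -/
noncomputable def ptr (d : ι → ℕ) (S : Finset ι) (M : Matrix (Cfg d) (Cfg d) ℂ) :
    Matrix (SubCfg d S) (SubCfg d S) ℂ :=
  Matrix.of fun a b => ∑ c : CoCfg d S, M (merge d S a c) (merge d S b c)

/-- The maximally mixed state `(1/d_S) I_S` on the parties in `S`. -/
noncomputable def unifMix (d : ι → ℕ) (S : Finset ι) :
    Matrix (SubCfg d S) (SubCfg d S) ℂ :=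
  (∏ i : S, (d i.1 : ℂ))⁻¹ • 1

/-- `ψ` is a unit vector. -/
def IsUnitVec (d : ι → ℕ) (ψ : H d) : Prop := dotc d ψ ψ = 1

/-- `ψ` is `r`-uniform: every reduction to `r` parties is maximally mixed. -/
def IsUniform (d : ι → ℕ) (r : ℕ) (ψ : H d) : Prop :=
  ∀ S : Finset ι, S.card = r → ptr d S (dyad d ψ ψ) = unifMix d S

/-- A subspace is `r`-uniform if every unit vector in it is an `r`-uniform state. -/
def IsUniformSubspace (d : ι → ℕ) (r : ℕ) (W : Submodule ℂ (H d)) : Prop :=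
  ∀ ψ ∈ W, IsUnitVec d ψ → IsUniform d r ψ

end RUnif

/-!
For two graph states `φ` and `ψ` of qutrits, the entries of a reduction of `|φ⟩⟨ψ|` are character
sums over `ZMod 3`, which vanish unless a shift and a phase error, both supported on the parties
that are kept, together map `ψ` to a multiple of `φ`. So a graph code that is pure of distance `3`
gives nine orthogonal states on six qutrits whose polarized reductions to two parties are
multiples of the maximally mixed operator. For the code used here, a phase error is a quadratic
polynomial on each half of the parties: an error on one half is excluded because a quadratic
polynomial that vanishes on `ZMod 3` has zero coefficients, and an error on both because `-1` is
not a square modulo `3`.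

Eight of the nine states are grouped into four pairs, and the two members of each pair are
entangled with `|0⟩` and `|1⟩` of the additional qubit. Since the members are orthogonal and have
the same reductions, the qubit is maximally mixed and uncorrelated with any other party.
-/

namespace RUnif

section PartialTrace

variable {ι : Type} {d : ι → ℕ} {S : Finset ι}

lemma unifMix_apply (a b : SubCfg d S) :
    unifMix d S a b = if a = b then (∏ i : S, (d i : ℂ))⁻¹ else 0 := by
  simp [unifMix, Matrix.one_apply]

variable [DecidableEq ι]

lemma restrict_merge (a : SubCfg d S) (c : CoCfg d S) : S.restrict (merge d S a c) = a := by
  ext i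
  simp [merge]

lemma restrict_compl_merge (a : SubCfg d S) (c : CoCfg d S) :
    (fun i : {j // j ∉ S} => merge d S a c i) = c := by
  ext i
  simp [merge, i.2]

variable [Fintype ι]

lemma sum_merge {E : Type*} [AddCommMonoid E] (S : Finset ι) (f : Cfg d → E) :
    ∑ a : SubCfg d S, ∑ c : CoCfg d S, f (merge d S a c) = ∑ x, f x := by
  rw [← Fintype.sum_prod_type']
  exact Equiv.sum_comp (Equiv.piEquivPiSubtypeProd (· ∈ S) fun i => Fin (d i)).symm f

lemma ptr_apply_eq_sum_ite (M : Matrix (Cfg d) (Cfg d) ℂ) (a b : SubCfg d S) :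
    ptr d S M a b =
      ∑ x, if S.restrict x = a then M x (merge d S b fun i => x i) else 0 := by
  rw [← sum_merge S]
  simp only [restrict_merge, restrict_compl_merge]
  rw [Finset.sum_comm]
  simp [ptr]

lemma prod_mul_card_coCfg (d : ι → ℕ) (S : Finset ι) :
    (∏ i : S, d i) * Fintype.card (CoCfg d S) = Fintype.card (Cfg d) := by
  simp only [Fintype.card_pi, Fintype.card_fin]
  convert Fintype.prod_subtype_mul_prod_subtype (· ∈ S) d

lemma ptr_dyad_sum_smul {κ : Type*} (S : Finset ι) (s : Finset κ) (φ : κ → H d) (α β : κ → ℂ) :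
    ptr d S (dyad d (∑ k ∈ s, α k • φ k) (∑ k ∈ s, β k • φ k)) =
      ∑ k ∈ s, ∑ l ∈ s, (α k * conj (β l)) • ptr d S (dyad d (φ k) (φ l)) := by
  ext a b
  simp only [ptr, dyad, Matrix.of_apply, Matrix.sum_apply, Matrix.smul_apply, Finset.sum_apply,
    Pi.smul_apply, smul_eq_mul, map_sum, map_mul, Finset.sum_mul_sum]
  simp only [Finset.mul_sum]
  rw [Finset.sum_comm]
  refine Finset.sum_congr rfl fun k _ => ?_
  rw [Finset.sum_comm]
  exact Finset.sum_congr rfl fun l _ => Finset.sum_congr rfl fun c _ => by ring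

lemma dotc_eq_of_ptr_empty {φ ψ : H d} {c : ℂ}
    (h : ptr d ∅ (dyad d ψ φ) = c • unifMix d ∅) : dotc d φ ψ = c := by
  have entry := congr_fun₂ h default default
  have trace : ∑ x, ψ x * conj (φ x) = c := by
    rw [← sum_merge ∅]
    simpa [ptr, dyad, unifMix] using entry
  rw [← trace]
  exact Finset.sum_congr rfl fun x _ => mul_comm _ _

end PartialTrace

section UniformFamily

variable {ι κ : Type} [Fintype ι] [DecidableEq ι] [DecidableEq κ] {d : ι → ℕ} {r : ℕ} {N : ℂ}
  {φ : κ → H d}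

/-- A family of vectors whose polarized reductions `Tr_{Sᶜ} |φ k⟩⟨φ l|` to at most `r` parties are
`N δ_{kl}` times the maximally mixed operator: the Knill–Laflamme conditions of a pure code. For
`S = ∅` they say that the vectors are orthogonal with squared norm `N`. -/
def IsUniformFamily (d : ι → ℕ) (r : ℕ) (N : ℂ) (φ : κ → H d) : Prop :=
  ∀ S : Finset ι, S.card ≤ r → ∀ k l,
    ptr d S (dyad d (φ k) (φ l)) = (if k = l then N else 0) • unifMix d S

namespace IsUniformFamily

lemma comp_injective {κ' : Type} [DecidableEq κ'] (h : IsUniformFamily d r N φ) {f : κ' → κ}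
    (hf : Function.Injective f) : IsUniformFamily d r N (φ ∘ f) := fun S hS k l => by
  simpa only [hf.eq_iff, Function.comp_apply] using h S hS (f k) (f l)

lemma dotc_eq_ite (h : IsUniformFamily d r N φ) (k l : κ) :
    dotc d (φ l) (φ k) = if k = l then N else 0 :=
  dotc_eq_of_ptr_empty (h ∅ (by simp) k l)

lemma linearIndependent (h : IsUniformFamily d r N φ) (hN : N ≠ 0) : LinearIndependent ℂ φ := by
  refine linearIndependent_iff'.2 fun s α hα l hl => ?_
  have inner_eq_zero : ∑ k ∈ s, α k * dotc d (φ l) (φ k) = 0 := by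
    have := congrArg (star (φ l) ⬝ᵥ ·) hα
    simp only [dotProduct_sum, dotProduct_smul, smul_eq_mul, dotProduct_zero] at this
    exact this
  simpa [h.dotc_eq_ite, hN, hl] using inner_eq_zero

theorem isUniformSubspace_span (h : IsUniformFamily d r N φ) :
    IsUniformSubspace d r (Submodule.span ℂ (Set.range φ)) := by
  intro ψ hψ hunit S hS
  obtain ⟨α, rfl : ∑ k ∈ α.support, α k • φ k = ψ⟩ :=
    Finsupp.mem_span_range_iff_exists_finsupp.1 hψ
  set ψ := ∑ k ∈ α.support, α k • φ k
  have ptr_eq : ∀ T : Finset ι, T.card ≤ r →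
      ptr d T (dyad d ψ ψ) = (∑ k ∈ α.support, α k * conj (α k) * N) • unifMix d T := fun T hT => by
    simp +contextual [ψ, ptr_dyad_sum_smul, h T hT, smul_smul, Finset.sum_smul]
  have norm_eq : dotc d ψ ψ = ∑ k ∈ α.support, α k * conj (α k) * N :=
    dotc_eq_of_ptr_empty (ptr_eq ∅ (by simp))
  rw [ptr_eq S hS.le, ← norm_eq, hunit, one_smul]

end IsUniformFamily

end UniformFamily

section AttachParty

variable {n : ℕ} {d : Fin (n + 1) → ℕ} {κ : Type} {S : Finset (Fin (n + 1))}

/-- The local dimensions of all parties but the front one. -/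
abbrev tailDims (d : Fin (n + 1) → ℕ) (i : Fin n) : ℕ := d i.succ

/-- The superpositions `∑ t, |t⟩ ⊗ φ (k, t)`: a new party, placed in front of the others, is
entangled with the members of each group of `φ`. -/
def attachParty (φ : κ × Fin (d 0) → H (tailDims d)) (k : κ) : H d :=
  fun x => φ (k, x 0) (Fin.tail x)

/-- The parties of `S` other than the front one, with indices shifted down. -/
def tailParties (S : Finset (Fin (n + 1))) : Finset (Fin n) :=
  Finset.univ.filter fun i => i.succ ∈ S

lemma mem_tailParties {i : Fin n} : i ∈ tailParties S ↔ i.succ ∈ S := by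
  simp [tailParties]

lemma card_tailParties_le (S : Finset (Fin (n + 1))) : (tailParties S).card ≤ S.card :=
  Finset.card_le_card_of_injOn Fin.succ (fun _ => mem_tailParties.1) (Fin.succ_injective n).injOn

lemma prod_eq_mul_prod_tailParties (S : Finset (Fin (n + 1))) (f : Fin (n + 1) → ℂ) :
    ∏ i : S, f i = (if 0 ∈ S then f 0 else 1) * ∏ i : tailParties S, f i.1.succ := by
  rw [Finset.prod_coe_sort S f, Finset.prod_coe_sort (tailParties S) fun i => f i.succ,
    tailParties, Finset.prod_filter, ← Fintype.prod_ite_mem, Fin.prod_univ_succ]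

/-- The part of a configuration of the parties in `S` that concerns `tailParties S`. -/
def tailCfg (a : SubCfg d S) : SubCfg (tailDims d) (tailParties S) :=
  fun i => a ⟨i.1.succ, mem_tailParties.1 i.2⟩

lemma subCfg_ext_iff_tailCfg {a b : SubCfg d S} :
    a = b ↔ (∀ h : 0 ∈ S, a ⟨0, h⟩ = b ⟨0, h⟩) ∧ tailCfg a = tailCfg b := by
  refine ⟨by rintro rfl; exact ⟨fun _ => rfl, rfl⟩, fun ⟨head_eq, tail_eq⟩ => ?_⟩
  funext ⟨i, hi⟩
  induction i using Fin.cases with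
  | zero => exact head_eq hi
  | succ i => exact congrFun tail_eq ⟨i, mem_tailParties.2 hi⟩

/-- The configuration in which the front party is in state `t` and the others in state `x`. -/
def consCfg (t : Fin (d 0)) (x : Cfg (tailDims d)) : Cfg d :=
  Fin.cons t x

lemma sum_consCfg {E : Type*} [AddCommMonoid E] (f : Cfg d → E) :
    ∑ t, ∑ x, f (consCfg t x) = ∑ x, f x := by
  rw [← Fintype.sum_prod_type']
  exact Equiv.sum_comp (Fin.consEquiv fun i => Fin (d i)) f

lemma restrict_consCfg_eq_iff {t : Fin (d 0)} {x : Cfg (tailDims d)} {a : SubCfg d S} :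
    S.restrict (consCfg t x) = a ↔
      (∀ h : 0 ∈ S, t = a ⟨0, h⟩) ∧ (tailParties S).restrict x = tailCfg a :=
  subCfg_ext_iff_tailCfg

lemma merge_consCfg (t : Fin (d 0)) (x : Cfg (tailDims d)) (b : SubCfg d S) :
    (merge d S b fun i => consCfg t x i) =
      consCfg (if h : 0 ∈ S then b ⟨0, h⟩ else t)
        (merge (tailDims d) (tailParties S) (tailCfg b) fun i => x i) := by
  funext i
  induction i using Fin.cases with
  | zero => rfl
  | succ i => exact dite_congr (propext mem_tailParties.symm) (fun _ => rfl) fun _ => rfl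

variable {φ : κ × Fin (d 0) → H (tailDims d)}

lemma ptr_dyad_attachParty_apply (k l : κ) (a b : SubCfg d S) :
    ptr d S (dyad d (attachParty φ k) (attachParty φ l)) a b =
      ∑ t, if ∀ h : 0 ∈ S, t = a ⟨0, h⟩ then
        ptr (tailDims d) (tailParties S)
          (dyad (tailDims d) (φ (k, t)) (φ (l, if h : 0 ∈ S then b ⟨0, h⟩ else t)))
          (tailCfg a) (tailCfg b)
      else 0 := by
  rw [ptr_apply_eq_sum_ite, ← sum_consCfg]
  refine Finset.sum_congr rfl fun t _ => ?_
  simp only [restrict_consCfg_eq_iff, merge_consCfg, ite_and, ptr_apply_eq_sum_ite]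
  by_cases ht : ∀ h : 0 ∈ S, t = a ⟨0, h⟩
  · simp only [if_pos ht]
    rfl
  · simp only [if_neg ht, Finset.sum_const_zero]

theorem IsUniformFamily.attachParty [DecidableEq κ] {r : ℕ} {N : ℂ}
    (h : IsUniformFamily (tailDims d) r N φ) :
    IsUniformFamily d r (d 0 * N) (attachParty φ) := by
  intro S hS k l
  have dims := prod_eq_mul_prod_tailParties S fun i => (d i : ℂ)
  ext a b
  rw [ptr_dyad_attachParty_apply]
  simp only [h _ ((card_tailParties_le S).trans hS), Matrix.smul_apply, unifMix_apply,
    dims, subCfg_ext_iff_tailCfg (a := a), Prod.mk.injEq]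
  by_cases h0 : 0 ∈ S
  · have front_ne_zero : (d 0 : ℂ) ≠ 0 := Nat.cast_ne_zero.2 (a ⟨0, h0⟩).pos.ne'
    simp only [forall_prop_of_true h0, Finset.sum_ite_eq', Finset.mem_univ, if_true, dif_pos h0,
      if_pos h0, ite_and]
    split_ifs <;> simp only [smul_eq_mul, zero_mul, mul_zero]
    field_simp
  · simp [h0, mul_assoc]

end AttachParty

section GraphFamily

variable {ι κ R : Type} [CommRing R] {p r : ℕ} {S : Finset ι} {χ : AddChar R ℂ}

section CfgDiff

variable [DecidableEq ι]

/-- The difference of two configurations of the parties in `S`, extended by zero. -/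
def cfgDiff (e : Fin p ≃ R) (a b : SubCfg (fun _ : ι => p) S) (i : ι) : R :=
  if h : i ∈ S then e (a ⟨i, h⟩) - e (b ⟨i, h⟩) else 0

lemma comp_merge_eq_add_cfgDiff (e : Fin p ≃ R) (a b : SubCfg (fun _ : ι => p) S)
    (c : CoCfg (fun _ : ι => p) S) :
    e ∘ merge _ S a c = e ∘ merge _ S b c + cfgDiff e a b := by
  funext i
  by_cases hi : i ∈ S <;> simp [merge, cfgDiff, hi]

lemma cfgDiff_eq_zero_iff {e : Fin p ≃ R} {a b : SubCfg (fun _ : ι => p) S} :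
    cfgDiff e a b = 0 ↔ a = b := by
  refine ⟨fun h => ?_, fun h => ?_⟩
  · funext i
    simpa [cfgDiff, sub_eq_zero] using congrFun h i
  · funext i
    simp [cfgDiff, h]

end CfgDiff

variable [Fintype ι] {M : Matrix ι ι R} {w : κ → ι → R}

/-- The phase of the basis vector `|v⟩` in a graph state: `M` holds the weights of the edges and `s`
linear corrections. -/
def quadPhase (M : Matrix ι ι R) (s v : ι → R) : R :=
  v ⬝ᵥ M *ᵥ v + s ⬝ᵥ v

/-- The phase error that a shift by `u` has to be combined with in order to map the graph state with
linear corrections `t` to a multiple of the one with linear corrections `s`. -/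
def phaseError (M : Matrix ι ι R) (s t u : ι → R) : ι → R :=
  (M + Mᵀ) *ᵥ u + s - t

lemma quadPhase_add_sub_quadPhase (M : Matrix ι ι R) (s t u v : ι → R) :
    quadPhase M s (v + u) - quadPhase M t v = quadPhase M s u + phaseError M s t u ⬝ᵥ v := by
  have adjoint : (Mᵀ *ᵥ u) ⬝ᵥ v = u ⬝ᵥ M *ᵥ v := by
    rw [Matrix.mulVec_transpose, Matrix.dotProduct_mulVec]
  simp only [quadPhase, phaseError, Matrix.mulVec_add, dotProduct_add, add_dotProduct,
    sub_dotProduct, Matrix.add_mulVec, adjoint, dotProduct_comm v (M *ᵥ u)]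
  ring

/-- The (unnormalized) graph states `∑ v, χ (quadPhase M (w k) v) |v⟩`, where the basis vectors of
every party are labelled by `R` through `e`. -/
def graphFamily (χ : AddChar R ℂ) (e : Fin p ≃ R) (M : Matrix ι ι R) (w : κ → ι → R)
    (k : κ) : H fun _ : ι => p :=
  fun x => χ (quadPhase M (w k) (e ∘ x))

/-- Apart from the identity, no shift by `u` combined with a phase error maps a graph state to a
multiple of a state of the family while touching at most `r` parties. In other words, the graph
states with edge weights `M` and linear corrections `w k` span a pure code of distance greater
than `r`. -/
def HasPureDistanceGT [DecidableEq R] (M : Matrix ι ι R) (w : κ → ι → R) (r : ℕ) : Prop :=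
  ∀ k l u, hammingNorm (fun j => (u j, phaseError M (w k) (w l) u j)) ≤ r → k = l ∧ u = 0

variable [DecidableEq ι]

lemma dotProduct_comp_merge (δ : ι → R) (e : Fin p ≃ R) (b : SubCfg (fun _ : ι => p) S)
    (c : CoCfg (fun _ : ι => p) S) :
    δ ⬝ᵥ (e ∘ merge _ S b c) = ∑ i : S, δ i * e (b i) + (fun i => δ i.1) ⬝ᵥ (e ∘ c) := by
  rw [dotProduct, ← Fintype.sum_subtype_add_sum_subtype (· ∈ S)]
  congr 1
  · convert rfl using 3 with i
    simp [merge, i.2]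
  · exact Finset.sum_congr rfl fun i _ => by simp [merge, i.2]

lemma sum_addChar_dotProduct_eq_zero [Fintype R] (hχ : χ.IsPrimitive) {δ : ι → R} (hδ : δ ≠ 0) :
    ∑ v, χ (δ ⬝ᵥ v) = 0 := by
  obtain ⟨j, hj⟩ := Function.ne_iff.1 hδ
  let ψ : AddChar (ι → R) ℂ :=
    χ.compAddMonoidHom (AddMonoidHom.mk' (δ ⬝ᵥ ·) (dotProduct_add δ))
  refine AddChar.sum_eq_zero_of_ne_one (ψ := ψ) fun hψ => hχ hj ?_
  ext t
  simpa [ψ] using DFunLike.congr_fun hψ (Pi.single j t)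

lemma ptr_dyad_graphFamily_apply [Fintype R] (e : Fin p ≃ R) (k l : κ)
    (a b : SubCfg (fun _ : ι => p) S) :
    ptr _ S (dyad _ (graphFamily χ e M w k) (graphFamily χ e M w l)) a b =
      χ (quadPhase M (w k) (cfgDiff e a b) +
          ∑ i : S, phaseError M (w k) (w l) (cfgDiff e a b) i * e (b i)) *
        ∑ y : {j // j ∉ S} → R,
          χ ((fun i => phaseError M (w k) (w l) (cfgDiff e a b) i.1) ⬝ᵥ y) := by
  rw [← (Equiv.piCongrRight fun _ => e).sum_comp, Finset.mul_sum]
  refine Finset.sum_congr rfl fun c _ => ?_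
  simp only [dyad, Matrix.of_apply, graphFamily]
  rw [← AddChar.map_neg_eq_conj, ← AddChar.map_add_eq_mul, ← AddChar.map_add_eq_mul,
    ← sub_eq_add_neg, comp_merge_eq_add_cfgDiff e a b, quadPhase_add_sub_quadPhase,
    dotProduct_comp_merge, add_assoc]
  rfl

theorem HasPureDistanceGT.isUniformFamily_graphFamily [DecidableEq R] [DecidableEq κ]
    (h : HasPureDistanceGT M w r) (hχ : χ.IsPrimitive) (e : Fin p ≃ R) :
    IsUniformFamily (fun _ : ι => p) r (Fintype.card (Cfg fun _ : ι => p))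
      (graphFamily χ e M w) := by
  let _ : Fintype R := .ofEquiv _ e
  intro S hS k l
  ext a b
  rw [ptr_dyad_graphFamily_apply, Matrix.smul_apply, unifMix_apply]
  by_cases hkl : k = l ∧ a = b
  · obtain ⟨rfl, rfl⟩ := hkl
    have dims_ne_zero : (∏ _i : S, (p : ℂ)) ≠ 0 :=
      Finset.prod_ne_zero_iff.2 fun i _ => Nat.cast_ne_zero.2 (a i).pos.ne'
    have card_eq : (Fintype.card (Cfg fun _ : ι => p) : ℂ) * (∏ _i : S, (p : ℂ))⁻¹ =
        Fintype.card (CoCfg (fun _ => p) S) := by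
      rw [← prod_mul_card_coCfg _ S, Nat.cast_mul, Nat.cast_prod, mul_right_comm,
        mul_inv_cancel₀ dims_ne_zero, one_mul]
    rw [cfgDiff_eq_zero_iff.2 rfl, ← (Equiv.piCongrRight fun _ => e).sum_comp, if_pos rfl,
      if_pos rfl, smul_eq_mul, card_eq]
    simp [phaseError, quadPhase]
  · suffices phase_ne :
        (fun i : {j // j ∉ S} => phaseError M (w k) (w l) (cfgDiff e a b) i.1) ≠ 0 by
      rw [sum_addChar_dotProduct_eq_zero hχ phase_ne]
      split_ifs <;> simp_all
    intro phase_eq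
    have weight_le : hammingNorm (fun j => (cfgDiff e a b j,
        phaseError M (w k) (w l) (cfgDiff e a b) j)) ≤ r := by
      refine (Finset.card_le_card fun j hj => ?_).trans hS
      contrapose! hj
      have := congrFun phase_eq ⟨j, hj⟩
      simp_all [cfgDiff]
    obtain ⟨k_eq, diff_eq⟩ := h k l _ weight_le
    exact hkl ⟨k_eq, cfgDiff_eq_zero_iff.1 diff_eq⟩

end GraphFamily

section HammingNorm

variable {ι ι' : Type} [Fintype ι] [Fintype ι'] {β : Type} [DecidableEq β] [Zero β]

lemma hammingNorm_comp_equiv (σ : ι' ≃ ι) (x : ι → β) : hammingNorm (x ∘ σ) = hammingNorm x :=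
  Finset.card_equiv σ (by simp)

lemma hammingNorm_sum (x : ι ⊕ ι' → β) :
    hammingNorm x = hammingNorm (x ∘ Sum.inl) + hammingNorm (x ∘ Sum.inr) := by
  simp only [hammingNorm, Finset.card_filter, Fintype.sum_sum_type]
  rfl

lemma exists_eq_zero_of_hammingNorm_lt_card {x : ι → β} (h : hammingNorm x < Fintype.card ι) :
    ∃ i, x i = 0 := by
  contrapose! h
  simp [hammingNorm, h]

lemma exists_forall_ne_of_hammingNorm_eq_one {x : ι → β} (h : hammingNorm x = 1) :
    ∃ p, ∀ i ≠ p, x i = 0 := by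
  obtain ⟨p, hp⟩ := Finset.card_eq_one.1 h
  refine ⟨p, fun i hi => ?_⟩
  by_contra hx
  exact hi (Finset.mem_singleton.1 (hp ▸ Finset.mem_filter.2 ⟨Finset.mem_univ i, hx⟩))

end HammingNorm

lemma HasPureDistanceGT.submatrix {ι ι' κ R : Type} [Fintype ι] [Fintype ι'] [CommRing R]
    [DecidableEq R] {M : Matrix ι ι R} {w : κ → ι → R} {r : ℕ} (h : HasPureDistanceGT M w r)
    (σ : ι' ≃ ι) :
    HasPureDistanceGT (M.submatrix σ σ) (fun k => w k ∘ σ) r := by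
  intro k l u weight_le
  have phaseError_eq : phaseError (M.submatrix σ σ) (w k ∘ σ) (w l ∘ σ) u =
      phaseError M (w k) (w l) (u ∘ σ.symm) ∘ σ := by
    have symm_part : M.submatrix σ σ + (M.submatrix σ σ)ᵀ = (M + Mᵀ).submatrix σ σ := rfl
    rw [phaseError, symm_part, Matrix.submatrix_mulVec_equiv]
    rfl
  rw [phaseError_eq, ← hammingNorm_comp_equiv σ.symm] at weight_le
  obtain ⟨k_eq, u_eq⟩ := h k l (u ∘ σ.symm) (by simpa [Function.comp_def] using weight_le)
  refine ⟨k_eq, ?_⟩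
  simpa [Function.comp_assoc] using congrArg (· ∘ σ) u_eq

section TernaryCode

lemma quadratic_eq_zero {c₀ c₁ c₂ : ZMod 3} (h : ∀ i, c₀ + c₁ * i + c₂ * i ^ 2 = 0) :
    c₀ = 0 ∧ c₁ = 0 ∧ c₂ = 0 := by
  revert h c₀ c₁ c₂
  decide

lemma quadratic_eq_zero_off {c₀ c₁ c₂ p : ZMod 3}
    (h : ∀ i ≠ p, c₀ + c₁ * i + c₂ * i ^ 2 = 0) : c₁ = c₂ * p ∧ c₀ = c₂ * (p ^ 2 - 1) := by
  revert h c₀ c₁ c₂ p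
  decide

lemma eq_zero_of_mul_sq_add_one {b s : ZMod 3} (h : b * (s ^ 2 + 1) = 0) : b = 0 := by
  revert h b s
  decide

lemma eq_zero_of_moments {u : ZMod 3 → ZMod 3} (h₀ : ∑ i, u i = 0) (h₁ : ∑ i, i * u i = 0)
    (h : ∃ i, u i = 0) : u = 0 := by
  revert u
  decide

/-- Edge weights of a bipartite graph on six qutrits: the parties are two copies of `ZMod 3`, and
the edge from `i` in the first copy to `j` in the second one has weight `j - i`. -/
def codeWeights : Matrix (ZMod 3 ⊕ ZMod 3) (ZMod 3 ⊕ ZMod 3) (ZMod 3) :=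
  Matrix.fromBlocks 0 (Matrix.of fun i j => j - i) 0 0

/-- The linear corrections labelled by `k = (a, b)`: `a + b i²` at the party `i` of the first copy
of `ZMod 3` and `a - b j²` at the party `j` of the second one. With `codeWeights` they give a
`[[6, 2, 3]]₃` stabilizer code. -/
def codeLabel (k : ZMod 3 × ZMod 3) : ZMod 3 ⊕ ZMod 3 → ZMod 3 :=
  Sum.elim (fun i => k.1 + k.2 * i ^ 2) (fun j => k.1 - k.2 * j ^ 2)

lemma phaseError_code (k l : ZMod 3 × ZMod 3) (u v : ZMod 3 → ZMod 3) :
    phaseError codeWeights (codeLabel k) (codeLabel l) (Sum.elim u v) = Sum.elim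
      (fun i => (∑ j, j * v j + (k - l).1) + -(∑ j, v j) * i + (k - l).2 * i ^ 2)
      (fun j => ((k - l).1 - ∑ i, i * u i) + (∑ i, u i) * j + -(k - l).2 * j ^ 2) := by
  have expand (x : ZMod 3 → ZMod 3) (m : ZMod 3) :
      ∑ i, (i - m) * x i = ∑ i, i * x i - m * ∑ i, x i := by
    simp only [sub_mul, Finset.sum_sub_distrib, Finset.mul_sum]
  have expand' (x : ZMod 3 → ZMod 3) (m : ZMod 3) :
      ∑ i, (m - i) * x i = m * ∑ i, x i - ∑ i, i * x i := by
    simp only [sub_mul, Finset.sum_sub_distrib, Finset.mul_sum]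
  rw [phaseError, codeWeights, Matrix.fromBlocks_transpose, Matrix.fromBlocks_add,
    Matrix.fromBlocks_mulVec]
  funext i
  rcases i with i | j <;>
  · simp only [Pi.add_apply, Pi.sub_apply, Sum.elim_inl, Sum.elim_inr, Sum.elim_comp_inl,
      Sum.elim_comp_inr, codeLabel, Matrix.mulVec, dotProduct, Matrix.transpose_apply,
      Matrix.add_apply, Matrix.zero_apply, Matrix.of_apply, add_zero, zero_add, zero_mul,
      Finset.sum_const_zero, expand, expand', Prod.fst_sub, Prod.snd_sub]
    ring

lemma one_sided_error_eq_zero {a b : ZMod 3} {u : ZMod 3 → ZMod 3}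
    (phase : ∀ j, (a - ∑ i, i * u i) + (∑ i, u i) * j + -b * j ^ 2 = 0)
    (weight_le : hammingNorm (fun i => (u i, a + b * i ^ 2)) ≤ 2) : a = 0 ∧ b = 0 ∧ u = 0 := by
  obtain ⟨i, hi⟩ := exists_eq_zero_of_hammingNorm_lt_card
    (weight_le.trans_lt (by rw [ZMod.card]; decide))
  obtain ⟨u_i, phase_i⟩ := Prod.mk.inj hi
  obtain ⟨h₀, h₁, h₂⟩ := quadratic_eq_zero phase
  have hb : b = 0 := neg_eq_zero.1 h₂
  have ha : a = 0 := by simpa [hb] using phase_i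
  exact ⟨ha, hb, eq_zero_of_moments h₁ (by simpa [ha] using h₀) ⟨i, u_i⟩⟩

lemma two_sided_error_eq_zero {a b p q : ZMod 3} {u v : ZMod 3 → ZMod 3}
    (hu : ∀ i ≠ p, u i = 0) (hv : ∀ j ≠ q, v j = 0)
    (phase_u : ∀ i ≠ p, (∑ j, j * v j + a) + -(∑ j, v j) * i + b * i ^ 2 = 0)
    (phase_v : ∀ j ≠ q, (a - ∑ i, i * u i) + (∑ i, u i) * j + -b * j ^ 2 = 0) :
    a = 0 ∧ b = 0 ∧ u = 0 ∧ v = 0 := by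
  have sums (x : ZMod 3 → ZMod 3) (m : ZMod 3) (hx : ∀ i ≠ m, x i = 0) :
      ∑ i, x i = x m ∧ ∑ i, i * x i = m * x m :=
    ⟨Fintype.sum_eq_single m hx, Fintype.sum_eq_single m fun i hi => by rw [hx i hi, mul_zero]⟩
  obtain ⟨v_sum, v_phase⟩ := quadratic_eq_zero_off phase_u
  obtain ⟨u_sum, u_phase⟩ := quadratic_eq_zero_off phase_v
  rw [(sums u p hu).1] at u_sum
  rw [(sums u p hu).2] at u_phase
  rw [(sums v q hv).1] at v_sum
  rw [(sums v q hv).2] at v_phase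
  have three_eq_zero : (3 : ZMod 3) = 0 := rfl
  have hb : b = 0 := eq_zero_of_mul_sq_add_one (s := p + q) <| by
    linear_combination u_phase - v_phase + p * u_sum - q * v_sum + b * three_eq_zero
  have u_p : u p = 0 := by rw [u_sum, hb, neg_zero, zero_mul]
  have v_q : v q = 0 := by rw [← neg_eq_zero, v_sum, hb, zero_mul]
  refine ⟨by simpa [hb, v_q] using v_phase, hb, ?_, ?_⟩
  · funext i
    exact (eq_or_ne i p).elim (fun h => h ▸ u_p) (hu i)
  · funext j
    exact (eq_or_ne j q).elim (fun h => h ▸ v_q) (hv j)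

theorem hasPureDistanceGT_code : HasPureDistanceGT codeWeights codeLabel 2 := by
  intro k l uv weight_le
  obtain ⟨u, v, rfl⟩ : ∃ u v, uv = Sum.elim u v := ⟨_, _, (Sum.elim_comp_inl_inr uv).symm⟩
  rw [phaseError_code] at weight_le
  set a := (k - l).1
  set b := (k - l).2
  set f : ZMod 3 → ZMod 3 := fun i => (∑ j, j * v j + a) + -(∑ j, v j) * i + b * i ^ 2 with hf
  set g : ZMod 3 → ZMod 3 := fun j => (a - ∑ i, i * u i) + (∑ i, u i) * j + -b * j ^ 2 with hg
  replace weight_le :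
      hammingNorm (fun i => (u i, f i)) + hammingNorm (fun j => (v j, g j)) ≤ 2 := by
    rwa [hammingNorm_sum] at weight_le
  suffices a = 0 ∧ b = 0 ∧ u = 0 ∧ v = 0 by
    obtain ⟨ha, hb, rfl, rfl⟩ := this
    exact ⟨sub_eq_zero.1 (Prod.ext ha hb), Sum.elim_zero_zero⟩
  rcases Nat.eq_zero_or_pos (hammingNorm fun j => (v j, g j)) with right_zero | right_pos
  · have right_eq := congrFun (hammingNorm_eq_zero.1 right_zero)
    obtain rfl : v = 0 := funext fun j => congrArg Prod.fst (right_eq j)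
    obtain ⟨ha, hb, hu⟩ := one_sided_error_eq_zero (fun j => congrArg Prod.snd (right_eq j))
      (by simpa [hf] using le_of_add_le_left weight_le)
    exact ⟨ha, hb, hu, rfl⟩
  rcases Nat.eq_zero_or_pos (hammingNorm fun i => (u i, f i)) with left_zero | left_pos
  · have left_eq := congrFun (hammingNorm_eq_zero.1 left_zero)
    obtain rfl : u = 0 := funext fun i => congrArg Prod.fst (left_eq i)
    obtain ⟨ha, hb, hv⟩ := one_sided_error_eq_zero (a := a) (b := -b) (u := -v)
      (fun i => by simpa [hf, add_comm a] using congrArg Prod.snd (left_eq i))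
      (by simpa [hg, hammingNorm] using le_of_add_le_right weight_le)
    exact ⟨ha, neg_eq_zero.1 hb, rfl, neg_eq_zero.1 hv⟩
  obtain ⟨p, hp⟩ := exists_forall_ne_of_hammingNorm_eq_one (x := fun i => (u i, f i)) (by omega)
  obtain ⟨q, hq⟩ := exists_forall_ne_of_hammingNorm_eq_one (x := fun j => (v j, g j)) (by omega)
  exact two_sided_error_eq_zero (p := p) (q := q) (fun i hi => congrArg Prod.fst (hp i hi))
    (fun j hj => congrArg Prod.fst (hq j hj)) (fun i hi => congrArg Prod.snd (hp i hi))
    (fun j hj => congrArg Prod.snd (hq j hj))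

theorem exists_isUniformFamily_six_qutrits :
    ∃ N : ℂ, N ≠ 0 ∧ ∃ φ : ZMod 3 × ZMod 3 → H fun _ : Fin 6 => 3,
      IsUniformFamily (fun _ => 3) 2 N φ := by
  let e : Fin 3 ≃ ZMod 3 := (ZMod.finEquiv 3).toEquiv
  let σ : Fin 6 ≃ ZMod 3 ⊕ ZMod 3 := finSumFinEquiv.symm.trans (Equiv.sumCongr e e)
  exact ⟨_, Nat.cast_ne_zero.2 Fintype.card_ne_zero, _,
    (hasPureDistanceGT_code.submatrix σ).isUniformFamily_graphFamily
      (ZMod.isPrimitive_stdAddChar 3) e⟩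

end TernaryCode

end RUnif

open RUnif in
/-- There exists a 4-dimensional 2-uniform subspace of `ℂ² ⊗ (ℂ³)^{⊗6}`. -/
theorem statement14 :
    ∃ W : Submodule ℂ (H ![2, 3, 3, 3, 3, 3, 3]),
      IsUniformSubspace ![2, 3, 3, 3, 3, 3, 3] 2 W ∧ Module.finrank ℂ W = 4 := by
  have dims : (fun _ => 3) = tailDims ![2, 3, 3, 3, 3, 3, 3] := by decide
  have qutrit_code := exists_isUniformFamily_six_qutrits
  rw [dims] at qutrit_code
  obtain ⟨N, hN, φ, hφ⟩ := qutrit_code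
  obtain ⟨f⟩ : Nonempty (Fin 4 × Fin 2 ↪ ZMod 3 × ZMod 3) :=
    Function.Embedding.nonempty_of_card_le (by decide)
  have family := (hφ.comp_injective f.injective).attachParty
  refine ⟨_, family.isUniformSubspace_span, ?_⟩
  rw [finrank_span_eq_card (family.linearIndependent (by simpa using hN)), Fintype.card_fin]
end

section
/- There exists a 3-uniform unit vector in the 9-partite space (C^2)^{⊗4} ⊗ (C^4)^{⊗5}, i.e., a unit vector whose reductions to any 3 of the 9 parties (four of local dimension 2 and five of local dimension 4) are maximally mixed. Moreover, there exists an 8-dimensional 2-uniform subspace of the 7-partite space (C^2)^{⊗3} ⊗ (C^4)^{⊗4}. -/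
/-!
Common definitions: multipartite systems with parties indexed by a finite type `ι`,
local dimensions `d : ι → ℕ`, vectors as functions on the configuration space,
partial traces, and `r`-uniform states and subspaces.
-/

open scoped ComplexConjugate Matrix

/-!
Both the vector and the subspace come from graph codes. The amplitudes are the signs `(-1) ^ Q(u)`,
where `Q(u) = ∑ u p * u q` over the edges `{p, q}` of a graph whose vertices carry bits; each vertex
belongs to a party or carries an input bit, which selects the code word. Changing the input bits and
the bits of the parties in `S` by `w` multiplies the amplitude by a sign that depends on the bits of
the other parties through the character `(-1) ^ polar Q w`, and the partial trace sums this
character. The sum vanishes unless the character is trivial, so the marginals on `S` are scalar and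
the cross terms between distinct code words vanish there, as soon as no nonzero `w` supported on
the inputs and on `S` gives the trivial character. This is a rank condition on the graph
(Schlingemann and Werner, *Quantum error-correcting codes associated with graphs*).
-/

namespace RUnif

open Finset

section PureCodes

variable {ι : Type} [Fintype ι] [DecidableEq ι] {d : ι → ℕ} {S : Finset ι}
variable {K : Type*}

theorem trace_ptr (M : Matrix (Cfg d) (Cfg d) ℂ) : (ptr d S M).trace = M.trace := by
  let e := Equiv.piEquivPiSubtypeProd (· ∈ S) fun i => Fin (d i)
  calc (ptr d S M).trace
      = ∑ p : SubCfg d S × CoCfg d S, M (e.symm p) (e.symm p) := (Fintype.sum_prod_type' _).symm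
    _ = M.trace := e.symm.sum_comp fun x => M x x

theorem trace_dyad (ψ φ : H d) : (dyad d ψ φ).trace = dotc d φ ψ :=
  sum_congr rfl fun _ _ => mul_comm _ _

theorem ptr_dyad_sum_left [Fintype K] (a : K → ℂ) (φ : K → H d) (ψ : H d) :
    ptr d S (dyad d (∑ k, a k • φ k) ψ) = ∑ k, a k • ptr d S (dyad d (φ k) ψ) := by
  ext x y
  simp only [ptr, dyad, Matrix.of_apply, Matrix.sum_apply, Matrix.smul_apply, Finset.sum_apply,
    Pi.smul_apply, smul_eq_mul, sum_mul, mul_sum, mul_assoc]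
  exact sum_comm

theorem ptr_dyad_sum_right [Fintype K] (a : K → ℂ) (φ : K → H d) (ψ : H d) :
    ptr d S (dyad d ψ (∑ k, a k • φ k)) = ∑ k, conj (a k) • ptr d S (dyad d ψ (φ k)) := by
  ext x y
  simp only [ptr, dyad, Matrix.of_apply, Matrix.sum_apply, Matrix.smul_apply, Finset.sum_apply,
    Pi.smul_apply, smul_eq_mul, map_sum, map_mul, mul_sum, mul_left_comm]
  exact sum_comm

theorem IsUnitVec.ptr_dyad_eq_unifMix {ψ : H d} (hψ : IsUnitVec d ψ) {t : ℂ}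
    (ht : ptr d S (dyad d ψ ψ) = t • 1) : ptr d S (dyad d ψ ψ) = unifMix d S := by
  have trace_eq_one : t * ∏ i : S, (d i : ℂ) = 1 := by
    have h : (t • 1 : Matrix (SubCfg d S) (SubCfg d S) ℂ).trace = 1 := by
      rw [← ht, trace_ptr, trace_dyad, hψ]
    simpa [Fintype.card_pi] using h
  rw [ht, unifMix, eq_inv_of_mul_eq_one_left trace_eq_one]

theorem dotc_self (ψ : H d) : dotc d ψ ψ = (∑ x, ‖ψ x‖ ^ 2 : ℝ) := by
  push_cast
  exact sum_congr rfl fun x _ => Complex.conj_mul' (ψ x)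

theorem isUnitVec_inv_sqrt_smul {ψ : H d} (hψ : ψ ≠ 0) :
    IsUnitVec d ((√(∑ x, ‖ψ x‖ ^ 2))⁻¹ • ψ) := by
  obtain ⟨x, hx⟩ := Function.ne_iff.1 hψ
  have norm_sq_pos : 0 < ∑ x, ‖ψ x‖ ^ 2 :=
    sum_pos' (fun _ _ => sq_nonneg _) ⟨x, mem_univ x, pow_pos (norm_pos_iff.2 hx) 2⟩
  rw [IsUnitVec, dotc_self, ← Complex.ofReal_one]
  congr 1
  simp only [Pi.smul_apply, norm_smul, norm_inv, mul_pow, inv_pow, Real.norm_eq_abs, sq_abs,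
    Real.sq_sqrt norm_sq_pos.le, ← mul_sum]
  exact inv_mul_cancel₀ norm_sq_pos.ne'

theorem exists_isUnitVec_mem {W : Submodule ℂ (H d)} (hW : W ≠ ⊥) :
    ∃ ψ ∈ W, IsUnitVec d ψ := by
  obtain ⟨φ, hφ, hφ0⟩ := W.exists_mem_ne_zero_of_ne_bot hW
  exact ⟨_, W.smul_of_tower_mem _ hφ, isUnitVec_inv_sqrt_smul hφ0⟩

/-- An unnormalised pure quantum code of distance `> r`: no `r` parties can tell the code words
apart, and each code word looks maximally mixed to them. The common norm `t` of the code words is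
left free, since only the span of the code matters. -/
def IsPureCode (d : ι → ℕ) (r : ℕ) (φ : K → H d) : Prop :=
  ∀ S : Finset ι, #S = r → ∃ t : ℂ, t ≠ 0 ∧
    (∀ k, ptr d S (dyad d (φ k) (φ k)) = t • 1) ∧
    Pairwise fun k l => ptr d S (dyad d (φ k) (φ l)) = 0

variable {r : ℕ} {φ : K → H d}

theorem IsPureCode.isUniformSubspace_span [Finite K] (h : IsPureCode d r φ) :
    IsUniformSubspace d r (Submodule.span ℂ (Set.range φ)) := by
  cases nonempty_fintype K
  intro ψ hψ hunit S hS
  obtain ⟨t, -, hdiag, hoff⟩ := h S hS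
  obtain ⟨a, rfl⟩ := (Submodule.mem_span_range_iff_exists_fun ℂ).1 hψ
  refine hunit.ptr_dyad_eq_unifMix (t := ∑ k, conj (a k) * (a k * t)) ?_
  simp only [ptr_dyad_sum_left, ptr_dyad_sum_right, sum_smul, mul_smul]
  refine sum_congr rfl fun k _ => congrArg (conj (a k) • ·) ?_
  rw [Fintype.sum_eq_single k fun l hl => by rw [hoff hl, smul_zero], hdiag]

theorem IsPureCode.linearIndependent [Finite K] [∀ i, NeZero (d i)] (h : IsPureCode d r φ)
    (hr : r ≤ Fintype.card ι) : LinearIndependent ℂ φ := by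
  cases nonempty_fintype K
  obtain ⟨S, -, hS⟩ := exists_subset_card_eq (s := (univ : Finset ι)) hr
  obtain ⟨t, ht, hdiag, hoff⟩ := h S hS
  refine Fintype.linearIndependent_iff.2 fun a ha l => ?_
  have coeff_eq : ptr d S (dyad d (∑ k, a k • φ k) (φ l)) = (a l * t) • 1 := by
    rw [ptr_dyad_sum_left, Fintype.sum_eq_single l fun k hk => by rw [hoff hk, smul_zero], hdiag,
      mul_smul]
  have ptr_eq_zero : ptr d S (dyad d (∑ k, a k • φ k) (φ l)) = 0 := by
    rw [ha]
    ext
    simp [ptr, dyad]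
  have := coeff_eq.symm.trans ptr_eq_zero
  simpa [ht] using this

theorem IsPureCode.finrank_span [Fintype K] [∀ i, NeZero (d i)] (h : IsPureCode d r φ)
    (hr : r ≤ Fintype.card ι) :
    Module.finrank ℂ (Submodule.span ℂ (Set.range φ)) = Fintype.card K :=
  finrank_span_eq_card (h.linearIndependent hr)

end PureCodes

section PhaseCodes

variable {ι : Type} [Fintype ι] [DecidableEq ι] {d : ι → ℕ} {S : Finset ι}
variable {R W L : Type*} {M : ι → Type*} [CommRing R] [AddCommGroup W] [Module R W]
  [AddCommGroup L] [Module R L] [∀ i, AddCommGroup (M i)] [∀ i, Module R (M i)]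
  (χ : AddChar R Circle) (Q : QuadraticForm R W) (ℓ : L →ₗ[R] W) (m : ∀ i, M i →ₗ[R] W)
  (e : ∀ i, Fin (d i) ≃ M i)

/-- The vector of phases `χ (Q w)`, where `w` runs through the translate by `u` of the sum of the
modules `M i`, and the `i`-th summand is controlled by the `i`-th party. -/
noncomputable def phaseVec (u : W) : H d :=
  fun x => χ (Q (u + ∑ i, m i (e i (x i))))

/-- The parties outside `S` together detect every change of the input in `L` and of the
configuration in `S`: a nontrivial change `(z, a)` alters the phase by a nontrivial character of the
configuration of some party outside `S`. -/
def DetectsOutside (S : Finset ι) : Prop :=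
  ∀ (z : L) (a : ∀ i : S, M i),
    (∀ i ∉ S, ∀ b, χ (Q.polarBilin (ℓ z + ∑ i : S, m i (a i)) (m i b)) = 1) → z = 0 ∧ a = 0

variable {m χ Q}

theorem sum_merge_s16 (a : SubCfg d S) (c : CoCfg d S) :
    ∑ i, m i (e i (merge d S a c i)) =
      ∑ i : S, m i (e i (a i)) + ∑ i : {j // j ∉ S}, m i (e i (c i)) := by
  rw [← Fintype.sum_subtype_add_sum_subtype (· ∈ S)]
  congr 1
  · exact sum_congr (by ext; simp) fun i _ => by rw [merge, dif_pos i.2]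
  · exact sum_congr rfl fun j _ => by rw [merge, dif_neg j.2]

theorem phase_add_mul_conj_phase_add (u v w : W) :
    (χ (Q (u + w)) : ℂ) * conj (χ (Q (v + w)) : ℂ) =
      χ (Q u - Q v) * χ (Q.polarBilin (u - v) w) := by
  have h : Q (u + w) + -Q (v + w) = Q u - Q v + Q.polarBilin (u - v) w := by
    rw [QuadraticMap.polarBilin_apply_apply, QuadraticMap.polar_sub_left, QuadraticMap.map_add Q u,
      QuadraticMap.map_add Q v]
    abel
  rw [← Circle.coe_inv_eq_conj, ← AddChar.map_neg_eq_inv, ← Circle.coe_mul, ← Circle.coe_mul,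
    ← AddChar.map_add_eq_mul, ← AddChar.map_add_eq_mul, h]

theorem sum_circle_addChar_eq_zero {A : Type*} [AddGroup A] [Fintype A] {ψ : AddChar A Circle}
    (hψ : ψ ≠ 1) : ∑ x, (ψ x : ℂ) = 0 :=
  AddChar.sum_eq_zero_of_ne_one (ψ := Circle.coeHom.compAddChar ψ) fun h =>
    hψ (Circle.coeHom.compAddChar_injective_right Circle.coe_injective h)

theorem sum_phase_outside_eq_zero {f : W →ₗ[R] R} {i : ι} (hi : i ∉ S) {b : M i}
    (hb : χ (f (m i b)) ≠ 1) :
    ∑ c : CoCfg d S, (χ (f (∑ j : {j // j ∉ S}, m j (e j (c j)))) : ℂ) = 0 := by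
  have (i : ι) : Fintype (M i) := Fintype.ofEquiv _ (e i)
  let g : (∀ j : {j // j ∉ S}, M j) →ₗ[R] R := f ∘ₗ LinearMap.lsum R _ R fun j => m j
  have g_apply (c) : g c = f (∑ j : {j // j ∉ S}, m j (c j)) := by simp [g]
  have ne_one : χ.compAddMonoidHom g.toAddMonoidHom ≠ 1 := by
    refine AddChar.ne_one_iff.2 ⟨Pi.single ⟨i, hi⟩ b, ?_⟩
    rwa [AddChar.compAddMonoidHom_apply, LinearMap.toAddMonoidHom_coe, g_apply,
      Fintype.sum_eq_single (⟨i, hi⟩ : {j // j ∉ S}), Pi.single_eq_same]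
    exact fun j hj => by rw [Pi.single_eq_of_ne hj, map_zero]
  rw [← sum_circle_addChar_eq_zero ne_one,
    ← (Equiv.piCongrRight fun j : {j // j ∉ S} => e j).sum_comp]
  exact sum_congr rfl fun c _ => by simp [g_apply]

theorem DetectsOutside.ptr_dyad_apply_eq_zero (h : DetectsOutside χ Q ℓ m S) {z z' : L}
    {a b : SubCfg d S} (hne : ¬(z = z' ∧ a = b)) :
    ptr d S (dyad d (phaseVec χ Q m e (ℓ z)) (phaseVec χ Q m e (ℓ z'))) a b = 0 := by
  obtain ⟨i, hi, β, hβ⟩ : ∃ i ∉ S, ∃ β, χ (Q.polarBilin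
      ((ℓ z + ∑ i : S, m i (e i (a i))) - (ℓ z' + ∑ i : S, m i (e i (b i)))) (m i β)) ≠ 1 := by
    by_contra! trivial_outside
    obtain ⟨hz, hab⟩ := h (z - z') (fun i => e i (a i) - e i (b i)) (by
      simpa only [map_sub, sum_sub_distrib, add_sub_add_comm] using trivial_outside)
    exact hne ⟨sub_eq_zero.1 hz,
      funext fun i => (e i).injective (sub_eq_zero.1 (congrFun hab i))⟩
  simp only [ptr, dyad, phaseVec, Matrix.of_apply, sum_merge_s16, ← add_assoc,
    phase_add_mul_conj_phase_add, ← mul_sum]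
  rw [sum_phase_outside_eq_zero e hi hβ, mul_zero]

theorem isPureCode_phaseVec [∀ i, NeZero (d i)] {r : ℕ}
    (h : ∀ S : Finset ι, #S = r → DetectsOutside χ Q ℓ m S) :
    IsPureCode d r fun z => phaseVec χ Q m e (ℓ z) := by
  refine fun S hS => ⟨Fintype.card (CoCfg d S), Nat.cast_ne_zero.2 Fintype.card_ne_zero, ?_, ?_⟩
  · intro z
    ext a b
    obtain rfl | hab := eq_or_ne a b
    · simp [ptr, dyad, phaseVec, Complex.mul_conj]
    · simpa [Matrix.one_apply_ne hab] using (h S hS).ptr_dyad_apply_eq_zero ℓ e fun H => hab H.2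
  · intro z z' hz
    ext a b
    exact (h S hS).ptr_dyad_apply_eq_zero ℓ e fun H => hz H.1

end PhaseCodes

section GraphCodes

variable {V : Type*}

/-- The adjacency between `T` and its complement, as a matrix over the field with two elements, has
independent rows: every nonempty `X ⊆ T` has a vertex outside `T` with an odd number of neighbours
in `X`. -/
def HasFullCutRank (G : SimpleGraph V) [DecidableRel G.Adj] (T : Finset V) : Prop :=
  ∀ X ⊆ T, X.Nonempty → ∃ p ∉ T, Odd #{q ∈ X | G.Adj p q}

-- Evaluating `Multiset.powerset` in the kernel is much faster than evaluating `Finset.powerset`,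
-- which carries along a proof for each subset.
instance [Fintype V] [DecidableEq V] (G : SimpleGraph V) [DecidableRel G.Adj] (T : Finset V) :
    Decidable (HasFullCutRank G T) :=
  decidable_of_iff (∀ X ∈ T.val.powerset, X ≠ 0 → ∃ p ∉ T, Odd (X.countP (G.Adj p))) <| by
    simp only [Multiset.mem_powerset, Multiset.countP_eq_card_filter]
    refine ⟨fun h X hX hne => h X.val (val_le_iff.2 hX) (val_eq_zero.not.2 hne.ne_empty),
      fun h X hX hne => ?_⟩
    have X_nodup : X.Nodup := Multiset.nodup_of_le hX T.nodup
    exact h ⟨X, X_nodup⟩ (val_le_iff.1 hX) (nonempty_iff_ne_empty.2 (val_eq_zero.not.1 hne))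

theorem polarBilin_toQuadraticMap_toBilin' {R : Type*} [CommRing R] [Fintype V] [DecidableEq V]
    (A : Matrix V V R) (u v : V → R) :
    (Matrix.toBilin' A).toQuadraticMap.polarBilin u v = u ⬝ᵥ (A + Aᵀ) *ᵥ v := by
  rw [QuadraticMap.polarBilin_apply_apply, LinearMap.BilinMap.polar_toQuadraticMap,
    Matrix.toBilin'_apply', Matrix.toBilin'_apply', Matrix.add_mulVec, dotProduct_add,
    Matrix.dotProduct_mulVec v, ← Matrix.mulVec_transpose, dotProduct_comm _ u]

section EdgeForm

variable [Fintype V] [LinearOrder V] (G : SimpleGraph V) [DecidableRel G.Adj]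
  (R : Type*) [CommRing R]

/-- The quadratic form `∑ u p * u q`, summed over the edges `{p, q}` of the graph. -/
def edgeForm : QuadraticForm R (V → R) :=
  (Matrix.toBilin' (Matrix.of fun p q => if p < q then G.adjMatrix R p q else 0)).toQuadraticMap

theorem polarBilin_edgeForm (u v : V → R) :
    (edgeForm G R).polarBilin u v = u ⬝ᵥ G.adjMatrix R *ᵥ v := by
  rw [edgeForm, polarBilin_toQuadraticMap_toBilin']
  congr
  ext p q
  rcases lt_trichotomy p q with h | rfl | h
  · simp [h, h.not_gt]
  · simp
  · simp [h, h.not_gt, G.adj_comm p q]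

theorem polarBilin_edgeForm_single (w : V → ZMod 2) (p : V) :
    (edgeForm G (ZMod 2)).polarBilin w (Pi.single p 1) = #{q ∈ {q | w q ≠ 0} | G.Adj p q} := by
  have eq_ite (x : ZMod 2) : x = if x ≠ 0 then 1 else 0 := by decide +revert
  calc (edgeForm G (ZMod 2)).polarBilin w (Pi.single p 1)
      = ∑ q, w q * if G.Adj p q then 1 else 0 := by
        rw [polarBilin_edgeForm]
        simp [dotProduct, G.adj_comm p]
    _ = ∑ q, if w q ≠ 0 ∧ G.Adj p q then 1 else 0 := by
        refine sum_congr rfl fun q _ => ?_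
        conv_lhs => rw [eq_ite (w q), ite_zero_mul_ite_zero, one_mul]
    _ = #{q ∈ {q | w q ≠ 0} | G.Adj p q} := by
        rw [filter_filter, card_filter, Nat.cast_sum]
        simp only [Nat.cast_ite, Nat.cast_one, Nat.cast_zero]

end EdgeForm

section Parties

variable {ι : Type} (R : Type*) [Semiring R] (party : V → Option ι)

/-- The inclusion of the functions on the vertices of party `o` into the functions on all vertices.
The vertices of party `none` are those carrying the input of the code. -/
noncomputable def extendParty (o : Option ι) :
    ({v // party v = o} → R) →ₗ[R] V → R :=
  Function.ExtendByZero.linearMap R Subtype.val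

variable {R party}

theorem extendParty_apply_of_eq {o : Option ι} (a : {v // party v = o} → R) {v : V}
    (hv : party v = o) : extendParty R party o a v = a ⟨v, hv⟩ :=
  Subtype.val_injective.extend_apply a 0 (⟨v, hv⟩ : {v // party v = o})

theorem extendParty_apply_of_ne {o : Option ι} (a : {v // party v = o} → R) {v : V}
    (hv : party v ≠ o) : extendParty R party o a v = 0 :=
  Function.extend_apply' _ _ _ fun ⟨w, hw⟩ => hv (hw ▸ w.2)

theorem extendParty_single [DecidableEq V] {o : Option ι} {v : V} (hv : party v = o) :
    extendParty R party o (Pi.single ⟨v, hv⟩ 1) = Pi.single v 1 := by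
  ext w
  by_cases hw : party w = o
  · simp [extendParty_apply_of_eq _ hw, Pi.single_apply]
  · rw [extendParty_apply_of_ne _ hw, Pi.single_eq_of_ne (by rintro rfl; exact hw hv)]

variable (z : {v // party v = none} → R) {S : Finset ι}
  (a : ∀ i : S, {v // party v = some i.1} → R) {v : V}

theorem extendParty_add_sum_of_none (hv : party v = none) :
    (extendParty R party none z + ∑ i : S, extendParty R party (some i) (a i)) v = z ⟨v, hv⟩ := by
  have others_zero (i : S) : extendParty R party (some i) (a i) v = 0 :=
    extendParty_apply_of_ne _ (by simp [hv])
  simp [extendParty_apply_of_eq _ hv, others_zero]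

theorem extendParty_add_sum_of_mem (i : S) (hv : party v = some i.1) :
    (extendParty R party none z + ∑ i : S, extendParty R party (some i) (a i)) v = a i ⟨v, hv⟩ := by
  rw [Pi.add_apply, Finset.sum_apply, extendParty_apply_of_ne _ (by simp [hv]), zero_add,
    Fintype.sum_eq_single i, extendParty_apply_of_eq _ hv]
  exact fun j hj => extendParty_apply_of_ne _ (by simpa [hv] using Subtype.coe_injective.ne hj.symm)

theorem extendParty_add_sum_of_notMem {i : ι} (hi : i ∉ S) (hv : party v = some i) :
    (extendParty R party none z + ∑ i : S, extendParty R party (some i) (a i)) v = 0 := by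
  have others_zero (j : S) : extendParty R party (some j) (a j) v = 0 :=
    extendParty_apply_of_ne _ (by rw [hv]; rintro ⟨⟩; exact hi j.2)
  rw [Pi.add_apply, Finset.sum_apply, extendParty_apply_of_ne _ (by simp [hv]), zero_add]
  exact sum_eq_zero fun j _ => others_zero j

end Parties

section CutRank

variable {ι : Type} [DecidableEq ι] [Fintype V] {party : V → Option ι} {S : Finset ι}

/-- The vertices that carry the input or belong to a party in `S`. -/
def knownVertices (party : V → Option ι) (S : Finset ι) : Finset V :=
  {v | ∀ i ∈ party v, i ∈ S}

theorem notMem_knownVertices {v : V} :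
    v ∉ knownVertices party S ↔ ∃ i, party v = some i ∧ i ∉ S := by
  simp [knownVertices]

variable [LinearOrder V] {G : SimpleGraph V} [DecidableRel G.Adj]

theorem HasFullCutRank.eq_zero_of_polarBilin_single {T : Finset V}
    (h : HasFullCutRank G T) {w : V → ZMod 2} (w_support : ∀ p ∉ T, w p = 0)
    (hw : ∀ p ∉ T, (edgeForm G (ZMod 2)).polarBilin w (Pi.single p 1) = 0) : w = 0 := by
  by_contra w_ne_zero
  obtain ⟨p, hp, hodd⟩ := h {v | w v ≠ 0}
    (fun v hv => by_contra fun hvT => (mem_filter.1 hv).2 (w_support v hvT))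
    (by simpa [filter_nonempty_iff] using Function.ne_iff.1 w_ne_zero)
  exact ZMod.natCast_ne_zero_iff_odd.2 hodd (polarBilin_edgeForm_single G w p ▸ hw p hp)

theorem HasFullCutRank.detectsOutside (h : HasFullCutRank G (knownVertices party S)) :
    DetectsOutside ZMod.toCircle (edgeForm G (ZMod 2)) (extendParty (ZMod 2) party none)
      (fun i => extendParty (ZMod 2) party (some i)) S := by
  intro z a trivial_outside
  have label_eq_zero :
      extendParty (ZMod 2) party none z +
        ∑ i : S, extendParty (ZMod 2) party (some i) (a i) = 0 := by
    refine h.eq_zero_of_polarBilin_single (fun p hp => ?_) (fun p hp => ?_)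
    all_goals obtain ⟨i, hpi, hi⟩ := notMem_knownVertices.1 hp
    · exact extendParty_add_sum_of_notMem z a hi hpi
    · have char_eq_one := trivial_outside i hi (Pi.single ⟨p, hpi⟩ 1)
      rwa [extendParty_single, ← (ZMod.toCircle (N := 2)).map_zero_eq_one,
        ZMod.injective_toCircle.eq_iff] at char_eq_one
  constructor
  · ext ⟨v, hv⟩
    rw [← extendParty_add_sum_of_none z a hv, label_eq_zero, Pi.zero_apply, Pi.zero_apply]
  · ext i ⟨v, hv⟩
    rw [← extendParty_add_sum_of_mem z a i hv, label_eq_zero, Pi.zero_apply, Pi.zero_apply,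
      Pi.zero_apply]

theorem exists_isUniformSubspace_of_hasFullCutRank [Fintype ι] {d : ι → ℕ} {r : ℕ}
    (G : SimpleGraph V) [DecidableRel G.Adj] (party : V → Option ι)
    (hd : ∀ i, d i = 2 ^ #{v | party v = some i}) (hr : r ≤ Fintype.card ι)
    (h : ∀ S : Finset ι, #S = r → HasFullCutRank G (knownVertices party S)) :
    ∃ W : Submodule ℂ (H d),
      IsUniformSubspace d r W ∧ Module.finrank ℂ W = 2 ^ #{v | party v = none} := by
  have (i : ι) : NeZero (d i) := ⟨by rw [hd]; positivity⟩
  have card_fun (o : Option ι) :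
      Fintype.card ({v // party v = o} → ZMod 2) = 2 ^ #{v | party v = o} := by
    rw [Fintype.card_fun, ZMod.card, Fintype.card_subtype]
  let e (i : ι) : Fin (d i) ≃ ({v // party v = some i} → ZMod 2) :=
    (Fintype.equivFinOfCardEq ((card_fun (some i)).trans (hd i).symm)).symm
  have pure_code := isPureCode_phaseVec _ e fun S hS => (h S hS).detectsOutside
  exact ⟨_, pure_code.isUniformSubspace_span, (pure_code.finrank_span hr).trans (card_fun none)⟩

end CutRank

end GraphCodes

/-- The graph of both constructions, found by computer search: the vertices form a cycle of length
`14`, and those at distance `1` or `4` are adjacent. -/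
def codeGraph : SimpleGraph (Fin 14) :=
  SimpleGraph.circulantGraph {1, 4}

instance : DecidableRel codeGraph.Adj :=
  inferInstanceAs (DecidableRel (SimpleGraph.circulantGraph {1, 4}).Adj)

/-- The distribution of the vertices of `codeGraph` over four qubits and five ququarts. No vertex
carries an input, so that the code is a single state. -/
def stateParty : Fin 14 → Option (Fin 9) :=
  some ∘ ![0, 1, 2, 4, 5, 4, 5, 6, 3, 6, 7, 8, 7, 8]

/-- The distribution of the vertices of `codeGraph` over three input bits, three qubits and four
ququarts. -/
def codeParty : Fin 14 → Option (Fin 7) :=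
  ![none, some 0, none, some 3, some 3, some 1, none, some 4, some 4, some 2, some 5, some 6,
    some 5, some 6]

theorem hasFullCutRank_stateParty :
    ∀ S : Finset (Fin 9), #S = 3 → HasFullCutRank codeGraph (knownVertices stateParty S) := by
  decide +kernel

theorem hasFullCutRank_codeParty :
    ∀ S : Finset (Fin 7), #S = 2 → HasFullCutRank codeGraph (knownVertices codeParty S) := by
  decide +kernel

end RUnif

open RUnif in
/-- There exists a 3-uniform unit vector in `(ℂ²)^{⊗4} ⊗ (ℂ⁴)^{⊗5}`,
and an 8-dimensional 2-uniform subspace of `(ℂ²)^{⊗3} ⊗ (ℂ⁴)^{⊗4}`. -/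
theorem statement16 :
    (∃ ψ : H ![2, 2, 2, 2, 4, 4, 4, 4, 4],
      IsUnitVec ![2, 2, 2, 2, 4, 4, 4, 4, 4] ψ ∧
      IsUniform ![2, 2, 2, 2, 4, 4, 4, 4, 4] 3 ψ) ∧
    (∃ W : Submodule ℂ (H ![2, 2, 2, 4, 4, 4, 4]),
      IsUniformSubspace ![2, 2, 2, 4, 4, 4, 4] 2 W ∧ Module.finrank ℂ W = 8) := by
  obtain ⟨W₁, hW₁, finrank_W₁⟩ := exists_isUniformSubspace_of_hasFullCutRank
    (d := ![2, 2, 2, 2, 4, 4, 4, 4, 4]) codeGraph stateParty (by decide) (by decide)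
    hasFullCutRank_stateParty
  obtain ⟨W₂, hW₂, finrank_W₂⟩ := exists_isUniformSubspace_of_hasFullCutRank
    (d := ![2, 2, 2, 4, 4, 4, 4]) codeGraph codeParty (by decide) (by decide)
    hasFullCutRank_codeParty
  have W₁_ne_bot : W₁ ≠ ⊥ := Submodule.one_le_finrank_iff.1 (finrank_W₁ ▸ Nat.one_le_two_pow)
  obtain ⟨ψ, hψ, hunit⟩ := exists_isUnitVec_mem W₁_ne_bot
  exact ⟨⟨ψ, hunit, hW₁ ψ hψ hunit⟩, W₂, hW₂, finrank_W₂⟩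
end
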